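/- Let L/K be a finite Galois field extension of degree n with Galois group G = {σ₁, ..., σₙ}, let H₀ = ker(Tr_{L/K}), let b₂, ..., bₙ be a K-basis of H₀, and let E₁ be the (n−1) × (n−1) matrix with (i,j) entry σⱼ(bᵢ) for 2 ≤ i, j ≤ n. If K has characteristic different from 2 and G has a cyclic Sylow 2-subgroup of order at least 2, then det E₁ = μα, where μ ∈ K, α ∈ L satisfies α² ∈ K, and K(α) is the unique quadratic extension of K contained in L. -/

import Mathlib

/-!
Put `G = Gal(L/K)`, `d = det E₁`, and prepend to the `bᵢ` an element `x` of trace `1`. Adding all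
columns of the full conjugate matrix `(σⱼ(cᵢ))` of the family `c = (x, b₂, …, bₙ)` to its first one
turns that column into `(1, 0, …, 0)`, so `d` is also the determinant of the full matrix. Hence `d²`
is the discriminant of `c`, a nonzero element of `K`, and `g ∈ G` acts on `d` by the sign of left
multiplication by `g` on `G`.

That permutation has `[G : ⟨g⟩]` cycles, each of length `orderOf g`, so it is odd when `g` generates
a nontrivial cyclic Sylow 2-subgroup. Then `g d = -d ≠ d`, and `K(d)` is quadratic. For the
uniqueness, two subgroups of index `2` both contain `g ^ 2`, so the index of their intersection
divides `2 [G : ⟨g⟩]`, which is not divisible by `4`.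
-/

open Equiv Matrix Subgroup

section Group

variable {G : Type*} [Group G]

theorem sign_mulLeft_coe [Fintype G] [DecidableEq G] (H : Subgroup G) [Fintype H] (h : H) :
    Perm.sign (Equiv.mulLeft (h : G)) = Perm.sign (Equiv.mulLeft h) ^ H.index := by
  classical
  obtain ⟨T, hT, -⟩ := H.exists_isComplement_right 1
  have conj_eq : ∀ x, hT.equiv (Equiv.mulLeft (h : G) x) =
      Equiv.prodCongrLeft (fun _ : T ↦ Equiv.mulLeft h) (hT.equiv x) :=
    fun x ↦ hT.equiv_mul_left h x
  rw [Perm.sign_eq_sign_of_equiv _ _ hT.equiv conj_eq, Perm.sign_prodCongrLeft, Finset.prod_const,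
    Finset.card_univ, ← Nat.card_eq_fintype_card, Nat.card_coe_set_eq, hT.ncard_right]

theorem isCycle_mulLeft {g : G} (hg : g ≠ 1) (hgen : ∀ x, x ∈ zpowers g) :
    (Equiv.mulLeft g).IsCycle := by
  refine ⟨1, by simpa using hg, fun y _ ↦ ?_⟩
  obtain ⟨k, rfl⟩ := mem_zpowers_iff.1 (hgen y)
  exact ⟨k, by simp [Equiv.zpow_mulLeft]⟩

theorem sign_mulLeft_of_generator [Fintype G] [DecidableEq G] {g : G}
    (hgen : ∀ x, x ∈ zpowers g) :
    Perm.sign (Equiv.mulLeft g) = (-1) ^ (orderOf g + 1) := by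
  rcases eq_or_ne g 1 with rfl | hg
  · simp
  · have support_eq : (Equiv.mulLeft g).support = Finset.univ := by
      ext x
      simp [hg]
    rw [(isCycle_mulLeft hg hgen).sign, support_eq, Finset.card_univ, ← Nat.card_eq_fintype_card,
      ← orderOf_eq_card_of_forall_mem_zpowers hgen, pow_succ, mul_neg_one]

theorem sign_mulLeft [Fintype G] [DecidableEq G] (g : G) :
    Perm.sign (Equiv.mulLeft g) = (-1) ^ ((orderOf g + 1) * (zpowers g).index) := by
  classical
  let γ : zpowers g := ⟨g, mem_zpowers g⟩
  have hγ : ∀ x, x ∈ zpowers γ := by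
    rintro ⟨_, k, rfl⟩
    exact ⟨k, rfl⟩
  rw [sign_mulLeft_coe (zpowers g) γ, sign_mulLeft_of_generator hγ, orderOf_mk, pow_mul]

theorem index_zpowers_pow [Finite G] (g : G) (n : ℕ) :
    (zpowers (g ^ n)).index = (orderOf g).gcd n * (zpowers g).index := by
  have orderOf_eq : orderOf g = orderOf (g ^ n) * (orderOf g).gcd n := by
    rw [orderOf_pow, Nat.div_mul_cancel (Nat.gcd_dvd_left _ _)]
  have card_eq : orderOf (g ^ n) * (zpowers (g ^ n)).index = orderOf g * (zpowers g).index := by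
    rw [← Nat.card_zpowers, ← Nat.card_zpowers, card_mul_index, card_mul_index]
  apply Nat.eq_of_mul_eq_mul_left (orderOf_pos (g ^ n))
  rw [card_eq, ← mul_assoc, ← orderOf_eq]

theorem le_of_index_eq_of_coprime_index_zpowers [Finite G] {g : G} {n : ℕ} {M N : Subgroup G}
    [M.Normal] [N.Normal] (hM : M.index = n) (hN : N.index = n)
    (hn : n.Coprime (zpowers g).index) : M ≤ N := by
  have pow_mem : g ^ n ∈ N ⊓ M := ⟨hN ▸ N.pow_index_mem g, hM ▸ M.pow_index_mem g⟩
  have index_dvd : (N ⊓ M).index ∣ n * (zpowers g).index :=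
    calc (N ⊓ M).index ∣ (zpowers (g ^ n)).index := index_dvd_of_le (zpowers_le.2 pow_mem)
      _ = (orderOf g).gcd n * (zpowers g).index := index_zpowers_pow g n
      _ ∣ n * (zpowers g).index := mul_dvd_mul_right (Nat.gcd_dvd_right _ _) _
  have index_eq : (N ⊓ M).index = n * N.relIndex M := by
    rw [← relIndex_mul_index inf_le_right, inf_relIndex_right, hM, mul_comm]
  have n_pos : 0 < n := hM ▸ Nat.pos_of_ne_zero M.index_ne_zero_of_finite
  have dvd_index_zpowers : N.relIndex M ∣ (zpowers g).index :=
    Nat.dvd_of_mul_dvd_mul_left n_pos (index_eq ▸ index_dvd)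
  have dvd_n : N.relIndex M ∣ n := hN ▸ N.relIndex_dvd_index_of_normal M
  exact relIndex_eq_one.1 (Nat.eq_one_of_dvd_coprimes hn dvd_n dvd_index_zpowers)

theorem eq_of_index_eq_of_coprime_index_zpowers [Finite G] {g : G} {n : ℕ} {M N : Subgroup G}
    [M.Normal] [N.Normal] (hM : M.index = n) (hN : N.index = n)
    (hn : n.Coprime (zpowers g).index) : M = N :=
  le_antisymm (le_of_index_eq_of_coprime_index_zpowers hM hN hn)
    (le_of_index_eq_of_coprime_index_zpowers hN hM hn)

theorem exists_even_orderOf_odd_index_zpowers [Finite G] (P : Sylow 2 G) [IsCyclic P]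
    (hP : 2 ≤ Nat.card P) : ∃ g : G, Even (orderOf g) ∧ Odd (zpowers g).index := by
  obtain ⟨g, hg⟩ := (Subgroup.isCyclic_iff_exists_zpowers_eq_top (P : Subgroup G)).1 ‹_›
  refine ⟨g, ?_, ?_⟩
  · obtain ⟨k, hk⟩ := IsPGroup.iff_card.1 P.isPGroup'
    have k_ne_zero : k ≠ 0 := by
      rintro rfl
      change 2 ≤ Nat.card (P : Subgroup G) at hP
      omega
    rw [← Nat.card_zpowers, hg, hk]
    exact even_two.pow_of_ne_zero k_ne_zero
  · rw [hg, ← Nat.not_even_iff_odd, even_iff_two_dvd]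
    exact P.not_dvd_index

end Group

theorem det_eq_sum_mul_det_submatrix_succ {R : Type*} [CommRing R] {n : ℕ}
    (M : Matrix (Fin (n + 1)) (Fin (n + 1)) R) (hM : ∀ i : Fin n, ∑ j, M i.succ j = 0) :
    M.det = (∑ j, M 0 j) * (M.submatrix Fin.succ Fin.succ).det := by
  have det_eq : (M.updateCol 0 fun i ↦ ∑ j, M i j).det = M.det := by
    simpa using det_updateCol_sum M 0 fun _ ↦ 1
  have submatrix_eq : (M.updateCol 0 fun i ↦ ∑ j, M i j).submatrix Fin.succ Fin.succ =
      M.submatrix Fin.succ Fin.succ := submatrix_updateCol_succAbove M _ Fin.succ 0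
  rw [← det_eq, det_succ_column_zero, Fin.sum_univ_succ, Finset.sum_eq_zero]
  · simp [submatrix_eq]
  · simp [hM]

section Galois

variable {K L : Type*} [Field K] [Field L] [Algebra K L]

theorem finrank_adjoin_simple_eq_two {α : L} (hsq : α ^ 2 ∈ (algebraMap K L).range)
    (hα : α ∉ (algebraMap K L).range) :
    Module.finrank K (IntermediateField.adjoin K {α}) = 2 := by
  obtain ⟨a, ha⟩ := hsq
  have root : Polynomial.aeval α (Polynomial.X ^ 2 - Polynomial.C a) = 0 := by simp [ha]
  have integral : IsIntegral K α := ⟨_, Polynomial.monic_X_pow_sub_C a two_ne_zero, root⟩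
  rw [IntermediateField.adjoin.finrank integral]
  refine le_antisymm ?_ ((minpoly.two_le_natDegree_iff integral).2 hα)
  simpa using Polynomial.natDegree_le_of_dvd (minpoly.dvd K α root)
    (Polynomial.X_pow_sub_C_ne_zero two_pos a)

theorem notMem_range_algebraMap_of_map_eq_neg (h2 : (2 : K) ≠ 0) {α : L} (hα : α ≠ 0)
    {g : L ≃ₐ[K] L} (hg : g α = -α) : α ∉ (algebraMap K L).range := by
  rintro ⟨a, rfl⟩
  rw [g.commutes, ← map_neg, (algebraMap K L).injective.eq_iff] at hg
  have two_mul_a : 2 * a = 0 := by linear_combination hg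
  exact hα (by simp [(mul_eq_zero.1 two_mul_a).resolve_left h2])

theorem eq_of_finrank_eq_of_coprime_index_zpowers [FiniteDimensional K L] [IsGalois K L]
    {g : L ≃ₐ[K] L} {n : ℕ} {F₁ F₂ : IntermediateField K L} [IsGalois K F₁] [IsGalois K F₂]
    (h₁ : Module.finrank K F₁ = n) (h₂ : Module.finrank K F₂ = n)
    (hn : n.Coprime (zpowers g).index) : F₁ = F₂ := by
  rw [IntermediateField.finrank_eq_fixingSubgroup_index] at h₁ h₂
  rw [← IsGalois.fixedField_fixingSubgroup F₁, ← IsGalois.fixedField_fixingSubgroup F₂,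
    eq_of_index_eq_of_coprime_index_zpowers h₁ h₂ hn]

theorem eq_of_finrank_eq_two_of_odd_index_zpowers [FiniteDimensional K L] [IsGalois K L]
    {g : L ≃ₐ[K] L} (hg : Odd (zpowers g).index) {F₁ F₂ : IntermediateField K L}
    (h₁ : Module.finrank K F₁ = 2) (h₂ : Module.finrank K F₂ = 2) : F₁ = F₂ :=
  have : Algebra.IsQuadraticExtension K F₁ := ⟨h₁⟩
  have : Algebra.IsQuadraticExtension K F₂ := ⟨h₂⟩
  eq_of_finrank_eq_of_coprime_index_zpowers h₁ h₂ (Nat.coprime_two_left.2 hg)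

/-- The matrix `(σⱼ(cᵢ))` of conjugates of a family `c` of elements of `L` under a family `σ` of
automorphisms over `K`; rows are indexed by `c`, columns by `σ`. -/
def conjugateMatrix {ι κ : Type*} (σ : ι → (L ≃ₐ[K] L)) (c : κ → L) : Matrix κ ι L :=
  of fun i j ↦ σ j (c i)

variable {ι : Type*} [Fintype ι]

theorem map_det_conjugateMatrix [DecidableEq ι] [Fintype (L ≃ₐ[K] L)]
    [DecidableEq (L ≃ₐ[K] L)] (σ : ι ≃ (L ≃ₐ[K] L)) (c : ι → L) (g : L ≃ₐ[K] L) :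
    g (conjugateMatrix σ c).det =
      (Perm.sign (Equiv.mulLeft g) : ℤ) * (conjugateMatrix σ c).det := by
  have map_eq_submatrix : g.mapMatrix (conjugateMatrix σ c) =
      (conjugateMatrix σ c).submatrix id (σ.symm.permCongr (Equiv.mulLeft g)) := by
    ext i j
    simp [conjugateMatrix]
  rw [AlgEquiv.map_det, map_eq_submatrix, det_permute', Perm.sign_permCongr]

theorem map_det_conjugateMatrix_eq_neg [FiniteDimensional K L] [DecidableEq ι]
    (σ : ι ≃ (L ≃ₐ[K] L)) (c : ι → L) {g : L ≃ₐ[K] L} (hg : Even (orderOf g))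
    (hindex : Odd (zpowers g).index) :
    g (conjugateMatrix σ c).det = -(conjugateMatrix σ c).det := by
  classical
  rw [map_det_conjugateMatrix, sign_mulLeft, (hg.add_one.mul hindex).neg_one_pow]
  simp

variable [FiniteDimensional K L] [IsGalois K L]

theorem sum_apply_eq_algebraMap_trace (σ : ι ≃ (L ≃ₐ[K] L)) (y : L) :
    ∑ j, σ j y = algebraMap K L (Algebra.trace K L y) := by
  rw [trace_eq_sum_automorphisms, ← σ.sum_comp]

theorem conjugateMatrix_mul_transpose {κ : Type*} (σ : ι ≃ (L ≃ₐ[K] L)) (c : κ → L) :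
    conjugateMatrix σ c * (conjugateMatrix σ c)ᵀ =
      (Algebra.traceMatrix K c).map (algebraMap K L) := by
  ext i j
  simp [mul_apply, conjugateMatrix, Algebra.traceMatrix_apply, Algebra.traceForm_apply,
    ← sum_apply_eq_algebraMap_trace σ]

theorem det_conjugateMatrix_sq [DecidableEq ι] (σ : ι ≃ (L ≃ₐ[K] L)) (c : ι → L) :
    (conjugateMatrix σ c).det ^ 2 = algebraMap K L (Algebra.discr K c) := by
  rw [Algebra.discr_def, RingHom.map_det, RingHom.mapMatrix_apply,
    ← conjugateMatrix_mul_transpose σ, det_mul, det_transpose, sq]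

theorem det_conjugateMatrix_ne_zero [DecidableEq ι] (σ : ι ≃ (L ≃ₐ[K] L)) {c : ι → L}
    (hc : LinearIndependent K c) : (conjugateMatrix σ c).det ≠ 0 := by
  have card_eq : Fintype.card ι = Module.finrank K L := by
    rw [← IsGalois.card_aut_eq_finrank, ← Nat.card_congr σ, Nat.card_eq_fintype_card]
  have discr_ne_zero : Algebra.discr K c ≠ 0 := by
    simpa using Algebra.discr_not_zero_of_basis K
      (basisOfLinearIndependentOfCardEqFinrank' c hc card_eq)
  rw [← pow_ne_zero_iff two_ne_zero, det_conjugateMatrix_sq]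
  simpa using discr_ne_zero

theorem det_conjugateMatrix_cons {n : ℕ} (σ : Fin (n + 1) ≃ (L ≃ₐ[K] L)) (x : L) {b : Fin n → L}
    (hb : ∀ i, Algebra.trace K L (b i) = 0) :
    (conjugateMatrix σ (Fin.cons x b : Fin (n + 1) → L)).det =
      algebraMap K L (Algebra.trace K L x) * (conjugateMatrix (fun j ↦ σ (Fin.succ j)) b).det := by
  rw [det_eq_sum_mul_det_submatrix_succ]
  · simp only [← sum_apply_eq_algebraMap_trace σ]
    rfl
  · intro i
    simp [conjugateMatrix, sum_apply_eq_algebraMap_trace, hb]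

end Galois

/-- With b₂, ..., bₙ a K-basis of H₀ = ker Tr and E₁ the (n-1) × (n-1) matrix
with (i,j) entry σⱼ(bᵢ): if char K ≠ 2 and G = Gal(L/K) has a cyclic Sylow
2-subgroup of order at least 2, then det E₁ = μ·α with μ ∈ K, α² ∈ K, and K(α)
the unique quadratic extension of K contained in L.
(Here the degree is n + 1 and the bᵢ are indexed by Fin n.) -/
theorem stmt14 (K L : Type*) [Field K] [Field L] [Algebra K L]
    [FiniteDimensional K L] [IsGalois K L]
    (n : ℕ) (hn : Module.finrank K L = n + 1)
    (σ : Fin (n + 1) ≃ (L ≃ₐ[K] L)) (b : Fin n → L)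
    (hb_ind : LinearIndependent K b)
    (hb_span : Submodule.span K (Set.range b) = LinearMap.ker (Algebra.trace K L))
    (hchar : ringChar K ≠ 2)
    (hsylow : ∃ P : Sylow 2 (L ≃ₐ[K] L), IsCyclic P ∧ 2 ≤ Nat.card P) :
    ∃ (μ : K) (α : L),
      (Matrix.of fun i j : Fin n => σ j.succ (b i)).det = algebraMap K L μ * α ∧
      α ^ 2 ∈ (algebraMap K L).range ∧
      Module.finrank K (IntermediateField.adjoin K {α}) = 2 ∧
      ∀ F : IntermediateField K L, Module.finrank K F = 2 →
        F = IntermediateField.adjoin K {α} := by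
  obtain ⟨P, hP, hP2⟩ := hsylow
  obtain ⟨g, hg_even, hg_odd⟩ := exists_even_orderOf_odd_index_zpowers P hP2
  obtain ⟨x, hx⟩ := Algebra.trace_surjective K L 1
  have trace_b (i : Fin n) : Algebra.trace K L (b i) = 0 :=
    LinearMap.mem_ker.1 (hb_span ▸ Submodule.subset_span ⟨i, rfl⟩)
  let c : Fin (n + 1) → L := Fin.cons x b
  have hc : LinearIndependent K c :=
    linearIndependent_finCons.2 ⟨hb_ind, by simp [hb_span, hx]⟩
  set d := (Matrix.of fun i j : Fin n => σ j.succ (b i)).det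
  have det_c : (conjugateMatrix σ c).det = d := by
    rw [det_conjugateMatrix_cons σ x trace_b, hx, map_one, one_mul]
    rfl
  have d_ne_zero : d ≠ 0 := det_c ▸ det_conjugateMatrix_ne_zero σ hc
  have map_d : g d = -d := det_c ▸ map_det_conjugateMatrix_eq_neg σ c hg_even hg_odd
  have d_sq : d ^ 2 ∈ (algebraMap K L).range :=
    ⟨Algebra.discr K c, by rw [← det_c, det_conjugateMatrix_sq]⟩
  have finrank_adjoin : Module.finrank K (IntermediateField.adjoin K {d}) = 2 :=
    finrank_adjoin_simple_eq_two d_sq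
      (notMem_range_algebraMap_of_map_eq_neg (Ring.two_ne_zero hchar) d_ne_zero map_d)
  exact ⟨1, d, by simp, d_sq, finrank_adjoin,
    fun F hF ↦ eq_of_finrank_eq_two_of_odd_index_zpowers hg_odd hF finrank_adjoin⟩
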